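/- Let G be a profinite group (a compact Hausdorff totally disconnected topological group) and let σ : G → G be a continuous group endomorphism that is expansive, i.e. there is an open normal subgroup N of G with ⋂_{i∈ℕ} (σ^i)⁻¹(N) = {1}. Let Γ be a compact topological group acting continuously on G by group automorphisms. Then there exists an open normal subgroup U of G such that ⋂_{i∈ℕ} (σ^i)⁻¹(U) = {1} and γ • U = U for every γ ∈ Γ. -/

import Mathlib

/-!
The intersection of all preimages of `N` under the action of `Γ` is a `Γ`-invariant normal
subgroup contained in `N`. Since the projection `Γ × G → G` along the compact space `Γ` is a closed
map, this intersection is still open. Shrinking `N` to a smaller subgroup cannot destroy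
expansiveness, as `1` is fixed by `σ`.
-/

open Function Set

theorem isOpen_setOf_forall_of_compactSpace {X Y : Type*} [TopologicalSpace X] [CompactSpace X]
    [TopologicalSpace Y] {W : Set (X × Y)} (hW : IsOpen W) : IsOpen {y | ∀ x, (x, y) ∈ W} := by
  have hkernImage : {y | ∀ x, (x, y) ∈ W} = kernImage Prod.snd W := by
    ext y
    simp [kernImage]
  rw [hkernImage]
  exact isClosedMap_iff_kernImage.1 isClosedMap_snd_of_compactSpace hW

theorem iInter_preimage_iterate_eq_singleton_of_subset {α : Type*} {f : α → α} {a : α}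
    {s t : Set α} (hf : IsFixedPt f a) (has : a ∈ s) (hst : s ⊆ t)
    (ht : ⋂ i : ℕ, f^[i] ⁻¹' t = {a}) : ⋂ i : ℕ, f^[i] ⁻¹' s = {a} := by
  apply Subset.antisymm
  · rw [← ht]
    exact iInter_mono fun i => preimage_mono hst
  · refine singleton_subset_iff.2 (mem_iInter.2 fun i => ?_)
    rwa [mem_preimage, hf.iterate i]

section SMulCore

/-- The largest subgroup of `N` stable under the action of `Γ`, the analogue of
`Subgroup.normalCore` for an arbitrary action by endomorphisms. The preimages `γ⁻¹(N)`, rather than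
the translates `γ • N`, are intersected, so that `Γ` may be a monoid. -/
def smulCore (Γ : Type*) {G : Type*} [Monoid Γ] [Group G] [MulDistribMulAction Γ G]
    (N : Subgroup G) : Subgroup G :=
  ⨅ γ : Γ, N.comap (MulDistribMulAction.toMonoidHom G γ)

variable {Γ G : Type*} [Group G]

section Monoid

variable [Monoid Γ] [MulDistribMulAction Γ G] {N : Subgroup G}

theorem mem_smulCore {g : G} : g ∈ smulCore Γ N ↔ ∀ γ : Γ, γ • g ∈ N := by
  simp [smulCore, Subgroup.mem_iInf]

theorem smulCore_le : smulCore Γ N ≤ N := fun g hg => by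
  simpa only [one_smul] using mem_smulCore.1 hg 1

theorem smul_mem_smulCore (γ : Γ) {g : G} (hg : g ∈ smulCore Γ N) : γ • g ∈ smulCore Γ N :=
  mem_smulCore.2 fun δ => by
    rw [smul_smul]
    exact mem_smulCore.1 hg (δ * γ)

instance smulCore_normal [hN : N.Normal] : (smulCore Γ N).Normal :=
  Subgroup.normal_iInf_normal fun _ => hN.comap _

theorem isOpen_smulCore [TopologicalSpace Γ] [CompactSpace Γ] [TopologicalSpace G]
    [ContinuousSMul Γ G] (hN : IsOpen (N : Set G)) : IsOpen (smulCore Γ N : Set G) := by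
  have hcoe : (smulCore Γ N : Set G) = {g | ∀ γ : Γ, γ • g ∈ N} := ext fun _ => mem_smulCore
  rw [hcoe]
  exact isOpen_setOf_forall_of_compactSpace (hN.preimage continuous_smul)

end Monoid

theorem isFixedBlock_smulCore [Group Γ] [MulDistribMulAction Γ G] (N : Subgroup G) :
    MulAction.IsFixedBlock Γ (smulCore Γ N : Set G) :=
  MulAction.IsInvariantBlock.isFixedBlock fun γ =>
    image_subset_iff.2 fun _ hg => smul_mem_smulCore γ hg

end SMulCore

theorem stmt9_general {G : Type*} [Group G] [TopologicalSpace G]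
    {σ : G → G} (hσ : IsFixedPt σ 1)
    (N : Subgroup G) (hNopen : IsOpen (N : Set G)) [N.Normal]
    (hNexp : (⋂ i : ℕ, σ^[i] ⁻¹' (N : Set G)) = {1})
    {Γ : Type*} [Group Γ] [TopologicalSpace Γ] [CompactSpace Γ]
    [MulDistribMulAction Γ G] [ContinuousSMul Γ G] :
    ∃ U : Subgroup G, IsOpen (U : Set G) ∧ U.Normal ∧
      (⋂ i : ℕ, σ^[i] ⁻¹' (U : Set G)) = {1} ∧
      ∀ γ : Γ, (γ • ·) '' (U : Set G) = (U : Set G) :=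
  ⟨smulCore Γ N, isOpen_smulCore hNopen, smulCore_normal,
    iInter_preimage_iterate_eq_singleton_of_subset hσ (one_mem _) smulCore_le hNexp,
    isFixedBlock_smulCore N⟩

/-- Let `G` be a profinite group with an expansive continuous endomorphism
`σ`, and let a compact topological group `Γ` act continuously on `G` by group automorphisms.
Then there is an open normal subgroup `U` of `G` with `⋂ᵢ (σ^i)⁻¹(U) = 1` and `γ • U = U`
for all `γ ∈ Γ`. -/
theorem stmt9 {G : Type*} [Group G] [TopologicalSpace G] [IsTopologicalGroup G]
    [CompactSpace G] [T2Space G] [TotallyDisconnectedSpace G]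
    (σ : G →* G) (hσcont : Continuous σ)
    (N : Subgroup G) (hNopen : IsOpen (N : Set G)) (hNnormal : N.Normal)
    (hNexp : (⋂ i : ℕ, (⇑σ)^[i] ⁻¹' (N : Set G)) = {1})
    {Γ : Type*} [Group Γ] [TopologicalSpace Γ] [IsTopologicalGroup Γ] [CompactSpace Γ]
    [MulDistribMulAction Γ G] [ContinuousSMul Γ G] :
    ∃ U : Subgroup G, IsOpen (U : Set G) ∧ U.Normal ∧
      (⋂ i : ℕ, (⇑σ)^[i] ⁻¹' (U : Set G)) = {1} ∧
      ∀ γ : Γ, (γ • ·) '' (U : Set G) = (U : Set G) :=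
  stmt9_general (map_one σ) N hNopen hNexp
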